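/- arXiv:1803.11092 — 2 statements merged into one kernel-verified Lean document; each statement's English description precedes it below -/
import Mathlib

section
/- Let k be an integer and m a positive integer. Let g be a Jacobi cusp form of weight k and index m, with qⁿ-coefficients g_n(ζ). Let ν : ℤ_{>0} → ℤ_{≥0} be finitely supported and set b(ζ) = Π_{r≥1} Φ_r(ζ)^{ν(r)}. If b(ζ) divides g_n(ζ) in ℂ[ζ,ζ⁻¹] for every integer n with 0 ≤ n ≤ max_{r≥1, ν(r)>0} ((k + ν(r) − 1)/12)·r³·Π_{p | r, p prime}(1 − 1/p²), then b(ζ) divides g_n(ζ) in ℂ[ζ,ζ⁻¹] for every n. -/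
open Complex LaurentPolynomial

/-!
Translating a Jacobi form by `x * τ + y` with `(x, y) = (0, b / r)` gives a function of `(τ, z)` on
which `Γ₁(r)` acts as on a Jacobi form, up to `r`-th roots of unity. If its Taylor coefficients at
`z = 0` of degree less than `j` vanish identically in `τ`, then the `r`-th power of the `j`-th one
is a modular form of weight `r * (k + j)` on `Γ₁(r)`: it is bounded at every cusp because slashing
only changes `(x, y)`, and the exponents `n + ρ * x + m * x ^ 2` occurring for any real `x` are
nonnegative because the discriminants `4 * n * m - ρ ^ 2` are. By Sturm's bound it vanishes as
soon as its `q`-expansion does so up to degree `r * (k + j) * [SL₂(ℤ) : Γ₁(r)] / 12`, that is, as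
soon as the `j`-th derivatives of `g_n(𝐞(z))` at `b / r` vanish for
`n ≤ (k + j) * [SL₂(ℤ) : Γ₁(r)] / 12`. Letting `j` run up to `ν r - 1` and `b / r` over the
primitive `r`-torsion points gives divisibility by the `ν r`-th power of the cyclotomic polynomial.
Finally `[SL₂(ℤ) : Γ₁(r)] ≤ r ^ 2`, while `1 ≤ r * ∏ (1 - 1 / p ^ 2)` over the primes `p ∣ r`.
-/

local notation "𝐞(" w ")" => Complex.exp (2 * Real.pi * Complex.I * w)

section ExponentialSeries

open Set Topology

variable {ι : Type*} {a : ι → ℂ} {l : ι → ℝ} {f : ℂ → ℂ} {S : Set ℝ}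

lemma norm_mul_exp_le_add (c : ℂ) (l : ℝ) {x y : ℝ} {z : ℂ} (hz : z.im ∈ Icc x y) :
    ‖c * 𝐞(l * z)‖ ≤ ‖c * 𝐞(l * (x * I))‖ + ‖c * 𝐞(l * (y * I))‖ := by
  have hnorm (w : ℂ) : ‖𝐞(l * w)‖ = Real.exp (-(2 * Real.pi * l * w.im)) := by
    rw [norm_exp]
    congr 1
    simp only [mul_re, re_ofNat, ofReal_re, im_ofNat, ofReal_im, mul_zero, sub_zero, I_re, mul_im,
      zero_mul, add_zero, I_im, mul_one, sub_self, zero_sub, neg_inj]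
    ring
  simp only [norm_mul c, hnorm, ← mul_add, im_ofReal_mul, I_im, mul_one]
  refine mul_le_mul_of_nonneg_left ?_ (norm_nonneg c)
  rcases le_total 0 l with hl | hl
  · refine (Real.exp_le_exp.mpr ?_).trans (le_add_of_nonneg_right (Real.exp_nonneg _))
    have := mul_le_mul_of_nonneg_left hz.1 (mul_nonneg Real.two_pi_pos.le hl)
    linarith
  · refine (Real.exp_le_exp.mpr ?_).trans (le_add_of_nonneg_left (Real.exp_nonneg _))
    have := mul_le_mul_of_nonpos_left hz.2 (mul_nonpos_of_nonneg_of_nonpos Real.two_pi_pos.le hl)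
    linarith

lemma hasDerivAt_mul_exp (c l z : ℂ) :
    HasDerivAt (fun z ↦ c * 𝐞(l * z)) (2 * Real.pi * I * l * c * 𝐞(l * z)) z :=
  ((((hasDerivAt_id' z).const_mul l).const_mul (2 * Real.pi * I)).cexp.const_mul c).congr_deriv
    (by ring)

theorem differentiableAt_and_hasSum_deriv_of_hasSum_exp (hS : IsOpen S)
    (hf : ∀ z, z.im ∈ S → HasSum (fun i ↦ a i * 𝐞(l i * z)) (f z)) {z : ℂ} (hz : z.im ∈ S) :
    DifferentiableAt ℂ f z ∧
      HasSum (fun i ↦ 2 * Real.pi * I * l i * a i * 𝐞(l i * z)) (deriv f z) := by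
  obtain ⟨ε, hε, hεS⟩ := Metric.nhds_basis_closedBall.mem_iff.mp (hS.mem_nhds hz)
  rw [Real.closedBall_eq_Icc] at hεS
  let U : Set ℂ := im ⁻¹' Ioo (z.im - ε) (z.im + ε)
  have hU : IsOpen U := isOpen_Ioo.preimage continuous_im
  have hzU : z ∈ U := ⟨by linarith, by linarith⟩
  have hsummable {x : ℝ} (hx : x ∈ Icc (z.im - ε) (z.im + ε)) :
      Summable fun i ↦ ‖a i * 𝐞(l i * (x * I))‖ :=
    (hf (x * I) (by simpa using hεS hx)).summable.norm
  have hbound := (hsummable (left_mem_Icc.mpr (by linarith))).add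
    (hsummable (right_mem_Icc.mpr (by linarith)))
  have hterm (i : ι) (w : ℂ) (hw : w ∈ U) :=
    norm_mul_exp_le_add (a i) (l i) (Ioo_subset_Icc_self hw)
  have hdiff (i : ι) : DifferentiableOn ℂ (fun w ↦ a i * 𝐞(l i * w)) U :=
    fun w _ ↦ (hasDerivAt_mul_exp (a i) (l i) w).differentiableAt.differentiableWithinAt
  have hf_eq : f =ᶠ[𝓝 z] fun w ↦ ∑' i, a i * 𝐞(l i * w) := by
    filter_upwards [hU.mem_nhds hzU] with w hw
    exact (hf w (hεS (Ioo_subset_Icc_self hw))).tsum_eq.symm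
  refine ⟨hf_eq.differentiableAt_iff.mpr ((differentiableOn_tsum_of_summable_norm hbound hdiff hU
    hterm).differentiableAt (hU.mem_nhds hzU)), ?_⟩
  rw [hf_eq.deriv_eq]
  simpa only [(hasDerivAt_mul_exp _ _ _).deriv] using
    hasSum_deriv_of_summable_norm hbound hdiff hU hterm hzU

theorem differentiable_of_hasSum_exp (hf : ∀ z, HasSum (fun i ↦ a i * 𝐞(l i * z)) (f z)) :
    Differentiable ℂ f := fun _ ↦
  (differentiableAt_and_hasSum_deriv_of_hasSum_exp isOpen_univ (fun z _ ↦ hf z) (mem_univ _)).1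

theorem hasSum_iteratedDeriv_of_hasSum_exp (hf : ∀ z, HasSum (fun i ↦ a i * 𝐞(l i * z)) (f z))
    (j : ℕ) (z : ℂ) :
    HasSum (fun i ↦ (2 * Real.pi * I * l i) ^ j * a i * 𝐞(l i * z)) (iteratedDeriv j f z) := by
  induction j generalizing z with
  | zero => simpa using hf z
  | succ j ih =>
    rw [iteratedDeriv_succ]
    convert (differentiableAt_and_hasSum_deriv_of_hasSum_exp isOpen_univ (fun z _ ↦ ih z)
      (mem_univ z.im)).2 using 3
    ring

end ExponentialSeries

section ExponentialSeriesUpperHalfPlane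

open UpperHalfPlane
open scoped Manifold

variable {ι : Type*} {a : ι → ℂ} {l : ι → ℝ} {F : ℍ → ℂ}

theorem mdifferentiable_of_hasSum_exp (hF : ∀ τ : ℍ, HasSum (fun i ↦ a i * 𝐞(l i * τ)) (F τ)) :
    MDiff F := by
  rw [UpperHalfPlane.mdifferentiable_iff]
  intro z hz
  refine (differentiableAt_and_hasSum_deriv_of_hasSum_exp (a := a) (l := l) (f := F ∘ ofComplex)
    isOpen_Ioi (fun w hw ↦ ?_) hz).1.differentiableWithinAt
  rw [Function.comp_apply, ofComplex_apply_of_im_pos hw]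
  exact hF ⟨w, hw⟩

theorem isBoundedAtImInfty_of_hasSum_exp
    (hF : ∀ τ : ℍ, HasSum (fun i ↦ a i * 𝐞(l i * τ)) (F τ)) (hl : ∀ i, a i ≠ 0 → 0 ≤ l i) :
    IsBoundedAtImInfty F := by
  rw [UpperHalfPlane.isBoundedAtImInfty_iff]
  refine ⟨∑' i, ‖a i * 𝐞(l i * UpperHalfPlane.I)‖, 1, fun τ hτ ↦ ?_⟩
  rw [← (hF τ).tsum_eq]
  refine tsum_of_norm_bounded (hF UpperHalfPlane.I).summable.norm.hasSum fun i ↦ ?_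
  rcases eq_or_ne (a i) 0 with hi | hi
  · simp [hi]
  rw [norm_mul, norm_mul, norm_exp, norm_exp]
  gcongr ?_ * Real.exp ?_
  have := mul_le_mul_of_nonneg_left hτ (mul_nonneg Real.two_pi_pos.le (hl i hi))
  simpa [mul_assoc] using this

end ExponentialSeriesUpperHalfPlane

section SturmBound

open UpperHalfPlane Filter Function
open scoped MatrixGroups ModularForm Manifold

local notation "𝕢" => Function.Periodic.qParam

lemma qParam_one_pow (z : ℂ) (n : ℕ) : 𝕢 1 z ^ n = 𝐞(n * z) := by
  rw [Function.Periodic.qParam, ← exp_nat_mul]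
  congr 1
  push_cast
  ring

lemma periodic_comp_ofComplex_of_vadd {u : ℍ → ℂ} {h : ℝ} (hu : ∀ τ, u (h +ᵥ τ) = u τ) :
    Periodic (u ∘ ofComplex) h := by
  intro w
  rcases lt_or_ge 0 w.im with hw | hw
  · have hw' : 0 < (w + h).im := by simpa using hw
    rw [comp_apply, comp_apply, ofComplex_apply_of_im_pos hw, ofComplex_apply_of_im_pos hw',
      ← hu ⟨w, hw⟩]
    congr 1
    ext
    simp [add_comm]
  · have hw' : (w + h).im ≤ 0 := by simpa using hw
    simp [ofComplex_apply_of_im_nonpos hw, ofComplex_apply_of_im_nonpos hw']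

lemma hasSum_coeff_add_iff {a : ℕ → ℂ} {q s : ℂ} {M : ℕ} (hq : q ≠ 0)
    (ha : ∀ n < M, a n = 0) :
    HasSum (fun n ↦ a (n + M) • q ^ n) (s / q ^ M) ↔ HasSum (fun n ↦ a n • q ^ n) s := by
  have hzero (n : ℕ) (hn : n ∉ Set.range (· + M)) : a n • q ^ n = 0 := by
    rw [ha n (not_le.mp fun h ↦ hn ⟨n - M, Nat.sub_add_cancel h⟩), zero_smul]
  rw [← (add_left_injective M).hasSum_iff hzero, ← hasSum_mul_right_iff (pow_ne_zero M hq),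
    div_mul_cancel₀ _ (pow_ne_zero M hq)]
  simp only [comp_def, pow_add, smul_eq_mul, mul_assoc]

theorem le_order_qExpansion_of_eq_qParam_pow_mul {k : ℤ} (f : ModularForm 𝒮ℒ k) {u : ℍ → ℂ}
    {M : ℕ} (hu : IsBoundedAtImInfty u) (hfu : ∀ τ : ℍ, f τ = 𝕢 1 τ ^ M * u τ) :
    M ≤ (qExpansion 1 f).order := by
  have hq (z : ℂ) : 𝕢 1 z ^ M ≠ 0 := pow_ne_zero _ (Periodic.qParam_ne_zero z)
  have hu_eq (τ : ℍ) : u τ = f τ / 𝕢 1 τ ^ M := by rw [hfu, mul_div_cancel_left₀ _ (hq τ)]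
  have hu_periodic : Periodic (u ∘ ofComplex) (1 : ℝ) := by
    refine periodic_comp_ofComplex_of_vadd fun τ ↦ ?_
    have hf := SlashInvariantForm.vAdd_apply_of_mem_strictPeriods f τ one_mem_strictPeriods_SL
    have hq_add : 𝕢 1 ((τ : ℂ) + (1 : ℝ)) = 𝕢 1 τ := by simp [Periodic.qParam, mul_add, exp_add]
    rw [hu_eq, hu_eq, hf, coe_vadd, add_comm, hq_add]
  have hu_mdiff : MDiff u := by
    rw [UpperHalfPlane.mdifferentiable_iff]
    refine ((UpperHalfPlane.mdifferentiable_iff.mp f.holo').fun_div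
      (Periodic.differentiable_qParam.pow M).differentiableOn fun z _ ↦ hq z).congr fun z hz ↦ ?_
    simp only [comp_apply, hu_eq, ofComplex_apply_of_im_pos hz]
    rfl
  have hsum (τ : ℍ) : HasSum
      (fun n ↦ (PowerSeries.X ^ M * qExpansion 1 u).coeff n • 𝕢 1 τ ^ n) (f τ) := by
    rw [← hasSum_coeff_add_iff (Periodic.qParam_ne_zero τ) fun n hn ↦ by
      rw [PowerSeries.coeff_X_pow_mul', if_neg hn.not_ge], ← hu_eq]
    simpa only [PowerSeries.coeff_X_pow_mul] using
      hasSum_qExpansion one_pos hu_periodic hu_mdiff hu τ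
  refine PowerSeries.nat_le_order _ _ fun n hn ↦ ?_
  rw [← ModularFormClass.qExpansion_coeff_unique one_pos one_mem_strictPeriods_SL hsum n,
    PowerSeries.coeff_X_pow_mul', if_neg hn.not_ge]

variable {𝒢 : Subgroup (GL (Fin 2) ℝ)} {k : ℤ}

lemma isBoundedAtImInfty_quotientFunc [𝒢.IsFiniteRelIndex 𝒮ℒ] (f : ModularForm 𝒢 k)
    (q : 𝒮ℒ ⧸ 𝒢.subgroupOf 𝒮ℒ) : IsBoundedAtImInfty (SlashInvariantForm.quotientFunc f q) := by
  induction q using Quotient.inductionOn with | h r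
  have hcusp : IsCusp OnePoint.infty 𝒮ℒ :=
    Subgroup.isCusp_of_mem_strictPeriods one_pos one_mem_strictPeriods_SL
  refine OnePoint.isBoundedAt_infty_iff.mp
    ((ModularForm.translate f (r : GL (Fin 2) ℝ)⁻¹).bdd_at_cusps' ?_)
  simpa using hcusp.of_isFiniteRelIndex_conj r.2

theorem eq_zero_of_eq_qParam_pow_mul [𝒢.IsFiniteRelIndex 𝒮ℒ] (f : ModularForm 𝒢 k) {u : ℍ → ℂ}
    {M : ℕ} (hu : IsBoundedAtImInfty u) (hfu : ∀ τ : ℍ, f τ = 𝕢 1 τ ^ M * u τ)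
    (hM : k * 𝒢.relIndex 𝒮ℒ < 12 * M) : (f : ℍ → ℂ) = 0 := by
  classical
  let : Fintype (𝒮ℒ ⧸ 𝒢.subgroupOf 𝒮ℒ) := Fintype.ofFinite _
  let v : ℍ → ℂ := ∏ q ∈ Finset.univ.erase (⟦1⟧ : 𝒮ℒ ⧸ 𝒢.subgroupOf 𝒮ℒ),
    SlashInvariantForm.quotientFunc f q
  have hv : IsBoundedAtImInfty v := .prod _ fun q _ ↦ isBoundedAtImInfty_quotientFunc f q
  have hnorm (τ : ℍ) : ModularForm.norm 𝒮ℒ f τ = 𝕢 1 τ ^ M * (u * v) τ := by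
    have hone : SlashInvariantForm.quotientFunc f (⟦1⟧ : 𝒮ℒ ⧸ 𝒢.subgroupOf 𝒮ℒ) = f := by simp
    have hprod : f * v = ∏ q : 𝒮ℒ ⧸ 𝒢.subgroupOf 𝒮ℒ, SlashInvariantForm.quotientFunc f q := by
      rw [← hone]
      exact Finset.mul_prod_erase Finset.univ _ (Finset.mem_univ _)
    simp only [ModularForm.coe_norm, ← hprod, Pi.mul_apply, hfu, mul_assoc]
  have horder := le_order_qExpansion_of_eq_qParam_pow_mul _ (hu.mul hv) hnorm
  change k * (Nat.card (𝒮ℒ ⧸ 𝒢.subgroupOf 𝒮ℒ) : ℤ) < _ at hM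
  rw [← ModularForm.norm_eq_zero_iff 𝒮ℒ]
  rcases lt_or_ge (k * (Nat.card (𝒮ℒ ⧸ 𝒢.subgroupOf 𝒮ℒ) : ℤ)) 0 with hneg | hnonneg
  · exact DFunLike.coe_injective (ModularFormClass.levelOne_neg_weight_eq_zero hneg _)
  · refine ModularForm.sturm_bound_levelOne (lt_of_lt_of_le ?_ horder)
    norm_cast
    omega

lemma isBoundedAtImInfty_pow {f : ℍ → ℂ} (hf : IsBoundedAtImInfty f) (N : ℕ) :
    IsBoundedAtImInfty (f ^ N) :=
  (boundedAtImInftySubalgebra ℂ).pow_mem hf N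

lemma pow_slash_SL2 (F : ℍ → ℂ) (w : ℤ) (N : ℕ) (γ : SL(2, ℤ)) :
    (F ^ N) ∣[N * w] γ = (F ∣[w] γ) ^ N := by
  ext τ
  rw [Pi.pow_apply, ModularForm.SL_slash_apply, ModularForm.SL_slash_apply, Pi.pow_apply, mul_pow,
    ← zpow_natCast (_ ^ (-w)), ← zpow_mul, neg_mul, mul_comm w]

theorem relIndex_map_mapGL_range (Γ : Subgroup SL(2, ℤ)) :
    (Γ : Subgroup (GL (Fin 2) ℝ)).relIndex 𝒮ℒ = Γ.index := by
  rw [← Subgroup.index_comap, Subgroup.comap_map_eq_self_of_injective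
    Matrix.SpecialLinearGroup.mapGL_injective]

theorem isBoundedAt_of_forall_SL2Z {f : ℍ → ℂ} {c : OnePoint ℝ} [𝒢.IsArithmetic]
    (hf : ∀ γ : SL(2, ℤ), IsBoundedAtImInfty (f ∣[k] γ)) (hc : IsCusp c 𝒢) :
    c.IsBoundedAt f k :=
  (OnePoint.isBoundedAt_iff_forall_SL2Z
    ((Subgroup.IsArithmetic.isCusp_iff_isCusp_SL2Z 𝒢).mp hc)).mpr fun γ _ ↦ hf γ

variable {Γ : Subgroup SL(2, ℤ)} [Γ.FiniteIndex] {w : ℤ} {F : ℍ → ℂ} {N : ℕ}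

theorem eq_zero_of_pow_slash_eq_of_eq_qParam_pow_mul (hN : N ≠ 0)
    (hslash : ∀ γ ∈ Γ, (F ∣[w] γ) ^ N = F ^ N) (hmdiff : MDiff F)
    (hbdd : ∀ γ : SL(2, ℤ), IsBoundedAtImInfty (F ∣[w] γ)) {u : ℍ → ℂ} {M : ℕ}
    (hu : IsBoundedAtImInfty u) (hFu : ∀ τ : ℍ, F τ = 𝕢 1 τ ^ M * u τ)
    (hM : w * Γ.index < 12 * M) : F = 0 := by
  let f : ModularForm (Γ : Subgroup (GL (Fin 2) ℝ)) (N * w) :=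
    { toFun := F ^ N
      slash_action_eq' := by
        rintro _ ⟨γ, hγ, rfl⟩
        exact (pow_slash_SL2 F w N γ).trans (hslash γ hγ)
      holo' := hmdiff.pow N
      bdd_at_cusps' := isBoundedAt_of_forall_SL2Z fun γ ↦ by
        rw [pow_slash_SL2]
        exact isBoundedAtImInfty_pow (hbdd γ) N }
  have hfu (τ : ℍ) : f τ = 𝕢 1 τ ^ (N * M) * (u ^ N) τ := by
    change F τ ^ N = _
    rw [hFu, mul_pow, ← pow_mul, mul_comm M, Pi.pow_apply]
  refine pow_eq_zero_iff hN |>.mp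
    (eq_zero_of_eq_qParam_pow_mul f (isBoundedAtImInfty_pow hu N) hfu ?_)
  rw [relIndex_map_mapGL_range]
  push_cast
  nlinarith [Nat.pos_of_ne_zero hN]

theorem sturm_bound_of_pow_slash_eq (hN : N ≠ 0) (hslash : ∀ γ ∈ Γ, (F ∣[w] γ) ^ N = F ^ N)
    (hbdd : ∀ γ : SL(2, ℤ), IsBoundedAtImInfty (F ∣[w] γ)) {a : ℕ → ℂ}
    (ha : ∀ τ : ℍ, HasSum (fun n : ℕ ↦ a n * 𝐞(n * τ)) (F τ))
    (h0 : ∀ n : ℕ, 12 * n ≤ w * Γ.index → a n = 0) : a = 0 := by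
  by_contra hne
  classical
  have hex : ∃ n, a n ≠ 0 := Function.ne_iff.mp hne
  let M := Nat.find hex
  have haM (n : ℕ) (hn : n < M) : a n = 0 := not_not.mp (Nat.find_min hex hn)
  have hq (τ : ℍ) : 𝕢 1 τ ^ M ≠ 0 := pow_ne_zero _ (Periodic.qParam_ne_zero _)
  have ha' (τ : ℍ) : HasSum (fun n ↦ a n • 𝕢 1 τ ^ n) (F τ) := by
    simpa only [qParam_one_pow, smul_eq_mul] using ha τ
  have hu (τ : ℍ) : HasSum (fun n ↦ a (n + M) • 𝕢 1 τ ^ n) (F τ / 𝕢 1 τ ^ M) :=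
    (hasSum_coeff_add_iff (Periodic.qParam_ne_zero _) haM).mpr (ha' τ)
  have hmdiff : MDiff F :=
    mdifferentiable_of_hasSum_exp (a := a) (l := fun n ↦ (n : ℝ)) (by simpa using ha)
  have hF : F = 0 := eq_zero_of_pow_slash_eq_of_eq_qParam_pow_mul hN hslash hmdiff hbdd
    (isBoundedAtImInfty_of_hasSum_qExpansion one_pos hu)
    (fun τ ↦ (mul_div_cancel₀ _ (hq τ)).symm) (lt_of_not_ge fun h ↦ Nat.find_spec hex (h0 M h))
  have h := ModularFormClass.qExpansion_coeff_unique (f := (0 : ModularForm 𝒮ℒ w)) one_pos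
    one_mem_strictPeriods_SL (fun τ ↦ by simpa [hF] using ha' τ) M
  exact Nat.find_spec hex (by simpa [qExpansion_zero] using h)

end SturmBound

section ExpEval

open Polynomial (cyclotomic)

/-- Evaluation of Laurent polynomials in `ζ` at `ζ = 𝐞(z)`, as a ring homomorphism to the functions
of `z`. -/
noncomputable def expEval : ℂ[T;T⁻¹] →+* (ℂ → ℂ) :=
  RingHom.pi fun z ↦ LaurentPolynomial.eval₂ (RingHom.id ℂ) (Units.mk0 𝐞(z) (exp_ne_zero _))

lemma expEval_T (n : ℤ) (z : ℂ) : expEval (T n) z = 𝐞(n * z) := by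
  simp [expEval, RingHom.pi_apply, ← exp_int_mul, mul_left_comm]

lemma expEval_toLaurent (P : Polynomial ℂ) (z : ℂ) : expEval P.toLaurent z = P.eval 𝐞(z) := by
  simp [expEval, RingHom.pi_apply, Polynomial.eval₂_id]

lemma expEval_apply (p : ℂ[T;T⁻¹]) (z : ℂ) :
    expEval p z = p.coeff.sum fun n a ↦ a * 𝐞(n * z) := by
  induction p using LaurentPolynomial.induction_on' with
  | add p q hp hq =>
    rw [map_add, Pi.add_apply, hp, hq, AddMonoidAlgebra.coeff_add,
      Finsupp.sum_add_index' (by simp) fun _ _ _ ↦ add_mul _ _ _]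
  | C_mul_T n a =>
    rw [map_mul, Pi.mul_apply, expEval_T, ← Polynomial.toLaurent_C, expEval_toLaurent,
      Polynomial.eval_C, Polynomial.toLaurent_C, ← LaurentPolynomial.single_eq_C_mul_T,
      AddMonoidAlgebra.coeff_single, Finsupp.sum_single_index (zero_mul _)]

lemma hasSum_expEval (p : ℂ[T;T⁻¹]) (z : ℂ) :
    HasSum (fun ρ : ℤ ↦ p.coeff ρ * 𝐞(ρ * z)) (expEval p z) := by
  rw [expEval_apply]
  exact hasSum_sum_of_ne_finset_zero fun ρ hρ ↦ by
    rw [Finsupp.notMem_support_iff.mp hρ, zero_mul]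

lemma differentiable_expEval (p : ℂ[T;T⁻¹]) : Differentiable ℂ (expEval p) := by
  have h : expEval p = fun z ↦ ∑ n ∈ p.coeff.support, p.coeff n * 𝐞(n * z) :=
    funext fun z ↦ expEval_apply p z
  rw [h]
  fun_prop

lemma analyticOrderAt_polynomial_eval {P : Polynomial ℂ} (hP : P ≠ 0) (x : ℂ) :
    analyticOrderAt (fun y ↦ P.eval y) x = P.rootMultiplicity x := by
  obtain ⟨Q, hPQ, hQ⟩ := P.exists_eq_pow_rootMultiplicity_mul_and_not_dvd hP x
  rw [P.differentiable.analyticAt x |>.analyticOrderAt_eq_natCast]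
  refine ⟨fun y ↦ Q.eval y, Q.differentiable.analyticAt x, ?_, .of_forall fun y ↦ ?_⟩
  · rwa [Polynomial.dvd_iff_isRoot] at hQ
  · nth_rw 1 [hPQ]
    simp

lemma analyticOrderAt_expEval_toLaurent {P : Polynomial ℂ} (hP : P ≠ 0) (z : ℂ) :
    analyticOrderAt (expEval P.toLaurent) z = P.rootMultiplicity 𝐞(z) := by
  have hcomp : expEval P.toLaurent = (fun y ↦ P.eval y) ∘ fun z ↦ 𝐞(z) :=
    funext (expEval_toLaurent P)
  have hexp : HasDerivAt (fun z ↦ 𝐞(z)) (𝐞(z) * (2 * Real.pi * I)) z := by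
    simpa using ((hasDerivAt_id' z).const_mul (2 * Real.pi * I)).cexp
  rw [hcomp, analyticOrderAt_comp_of_deriv_ne_zero (by fun_prop) (by simp [hexp.deriv]),
    analyticOrderAt_polynomial_eval hP]

theorem pow_dvd_iff_iteratedDeriv_expEval_eq_zero (p : ℂ[T;T⁻¹]) (z : ℂ) (V : ℕ) :
    (Polynomial.X - Polynomial.C 𝐞(z)).toLaurent ^ V ∣ p ↔
      ∀ i < V, iteratedDeriv i (expEval p) z = 0 := by
  have hanalytic (p : ℂ[T;T⁻¹]) : AnalyticAt ℂ (expEval p) z :=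
    (differentiable_expEval p).analyticAt z
  rw [← natCast_le_analyticOrderAt_iff_iteratedDeriv_eq_zero (hanalytic p)]
  constructor
  · rintro ⟨q, rfl⟩
    rw [map_mul, map_pow, analyticOrderAt_mul ((hanalytic _).pow V) (hanalytic q),
      analyticOrderAt_pow (hanalytic _),
      analyticOrderAt_expEval_toLaurent (Polynomial.X_sub_C_ne_zero _),
      Polynomial.rootMultiplicity_X_sub_C_self]
    simp
  · intro hV
    obtain ⟨n, P, hP⟩ := p.exists_T_pow
    rw [← (isUnit_T (R := ℂ) n).dvd_mul_right, ← hP, ← map_pow]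
    refine map_dvd _ ?_
    rcases eq_or_ne P 0 with rfl | hP0
    · exact dvd_zero _
    rw [← Polynomial.le_rootMultiplicity_iff hP0]
    have hT : analyticOrderAt (expEval (T n)) z = 0 := by
      rw [(hanalytic _).analyticOrderAt_eq_zero, expEval_T]
      exact exp_ne_zero _
    have horder := analyticOrderAt_expEval_toLaurent hP0 z
    rw [hP, map_mul, analyticOrderAt_mul (hanalytic p) (hanalytic _), hT, add_zero] at horder
    exact_mod_cast horder ▸ hV

theorem cyclotomic_pow_dvd_iff {r : ℕ} (hr : r ≠ 0) (V : ℕ) (p : ℂ[T;T⁻¹]) :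
    (cyclotomic r ℂ).toLaurent ^ V ∣ p ↔
      ∀ b : ℕ, b.Coprime r → ∀ i < V, iteratedDeriv i (expEval p) (b / r) = 0 := by
  simp only [← pow_dvd_iff_iteratedDeriv_expEval_eq_zero]
  constructor
  · intro h b hb
    refine (pow_dvd_pow_of_dvd (map_dvd _ ?_) V).trans h
    rw [Polynomial.dvd_iff_isRoot]
    exact (isPrimitiveRoot_exp_of_coprime b r hr hb).isRoot_cyclotomic hr.bot_lt
  · intro h
    rw [Polynomial.cyclotomic_eq_prod_X_sub_primitiveRoots (isPrimitiveRoot_exp r hr), map_prod,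
      ← Finset.prod_pow]
    refine Finset.prod_dvd_of_coprime (fun x _ y _ hxy ↦ ?_) fun x hx ↦ ?_
    · exact ((Polynomial.isCoprime_X_sub_C_of_isUnit_sub (sub_ne_zero.mpr hxy).isUnit).map _).pow
    · obtain ⟨b, -, hb, rfl⟩ :=
        (isPrimitiveRoot_iff x r hr).mp (isPrimitiveRoot_of_mem_primitiveRoots hx)
      exact h b hb

theorem prod_cyclotomic_pow_dvd_iff {ν : ℕ → ℕ} {s : Finset ℕ} {p : ℂ[T;T⁻¹]} :
    ∏ r ∈ s, (cyclotomic r ℂ).toLaurent ^ ν r ∣ p ↔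
      ∀ r ∈ s, (cyclotomic r ℂ).toLaurent ^ ν r ∣ p := by
  refine ⟨fun h r hr ↦ ?_, Finset.prod_dvd_of_coprime fun r _ t _ hrt ↦ ?_⟩
  · exact (Finset.dvd_prod_of_mem (fun r ↦ (cyclotomic r ℂ).toLaurent ^ ν r) hr).trans h
  · have hcoprime := (Polynomial.cyclotomic.isCoprime_rat hrt).map
      (Polynomial.mapRingHom (algebraMap ℚ ℂ))
    simp only [Polynomial.coe_mapRingHom, Polynomial.map_cyclotomic] at hcoprime
    exact (hcoprime.map Polynomial.toLaurent).pow

end ExpEval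

section JacobiForm

open UpperHalfPlane
open scoped MatrixGroups ModularForm Manifold

/-- `φ` is a Jacobi form of weight `k` and index `m`, whose `n`-th Fourier coefficient with respect
to `τ` is the Laurent polynomial `g n` in `ζ = 𝐞(z)`. Holomorphy of `φ` is not a separate field
because it follows from `hasSum`. -/
structure IsJacobiForm (k m : ℤ) (φ : ℍ → ℂ → ℂ) (g : ℤ → ℂ[T;T⁻¹]) : Prop where
  smul_eq (γ : SL(2, ℤ)) (τ : ℍ) (z : ℂ) : φ (γ • τ) (z / denom γ τ) =
    denom γ τ ^ k * 𝐞(m * γ 1 0 * z ^ 2 / denom γ τ) * φ τ z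
  add_eq (l u : ℤ) (τ : ℍ) (z : ℂ) :
    φ τ (z + l * τ + u) = 𝐞(-m * l ^ 2 * τ - 2 * m * l * z) * φ τ z
  hasSum (τ : ℍ) (z : ℂ) :
    HasSum (fun p : ℤ × ℤ ↦ (g p.1).coeff p.2 * 𝐞(p.1 * τ + p.2 * z)) (φ τ z)
  coeff_eq_zero (n ρ : ℤ) : 4 * n * m - ρ ^ 2 < 0 → (g n).coeff ρ = 0

/-- The translate of `φ` by `x * τ + y`, that is, the action `φ ∣ [x, y]` in index `m` of an element
of the real Heisenberg group. The constant factor `𝐞(m * x * y)` makes it exactly equivariant under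
`SL(2, ℤ)`. -/
noncomputable def heisenbergTranslate (m : ℤ) (φ : ℍ → ℂ → ℂ) (x y : ℝ) (τ : ℍ) (z : ℂ) : ℂ :=
  𝐞(m * (x ^ 2 * τ + 2 * x * z + x * y)) * φ τ (z + x * τ + y)

lemma heisenbergTranslate_zero_left (m : ℤ) (φ : ℍ → ℂ → ℂ) (y : ℝ) (τ : ℍ) :
    heisenbergTranslate m φ 0 y τ = fun z ↦ φ τ (z + y) := by
  ext z
  simp [heisenbergTranslate]

lemma iteratedDeriv_mul_of_forall_lt_eq_zero {u f : ℂ → ℂ} {z : ℂ} {j : ℕ}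
    (hu : ContDiffAt ℂ j u z) (hf : ContDiffAt ℂ j f z) (h : ∀ i < j, iteratedDeriv i f z = 0) :
    iteratedDeriv j (fun w ↦ u w * f w) z = u z * iteratedDeriv j f z := by
  rw [iteratedDeriv_fun_mul hu hf, Finset.sum_eq_single 0]
  · simp
  · intro i hi hi0
    rw [h (j - i) (by grind), mul_zero]
  · simp

namespace IsJacobiForm

variable {k m : ℤ} {φ : ℍ → ℂ → ℂ} {g : ℤ → ℂ[T;T⁻¹]}

theorem heisenbergTranslate_smul (hφ : IsJacobiForm k m φ g) (γ : SL(2, ℤ)) (x y : ℝ) (τ : ℍ)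
    (z : ℂ) : heisenbergTranslate m φ x y (γ • τ) (z / denom γ τ) =
      denom γ τ ^ k * 𝐞(m * γ 1 0 * z ^ 2 / denom γ τ) *
        heisenbergTranslate m φ (x * γ 0 0 + y * γ 1 0) (x * γ 0 1 + y * γ 1 1) τ z := by
  have hJ : denom γ τ ≠ 0 := denom_ne_zero _ τ
  have hdet : (γ 0 0 * γ 1 1 - γ 0 1 * γ 1 0 : ℂ) = 1 := by
    exact_mod_cast (Matrix.det_fin_two _).symm.trans γ.det_coe
  have hτ : ((γ • τ : ℍ) : ℂ) = (γ 0 0 * τ + γ 0 1) / denom γ τ := by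
    rw [UpperHalfPlane.coe_specialLinearGroup_apply, ModularGroup.denom_apply]
    simp
  set w : ℂ := z + (x * γ 0 0 + y * γ 1 0 : ℝ) * τ + (x * γ 0 1 + y * γ 1 1 : ℝ) with hw
  have harg : z / denom γ τ + x * (γ • τ : ℍ) + y = w / denom γ τ := by
    rw [hτ, hw]
    field_simp
    rw [ModularGroup.denom_apply]
    push_cast
    ring
  rw [heisenbergTranslate, harg, hφ.smul_eq, heisenbergTranslate, ← hw]
  suffices h : 𝐞(m * (x ^ 2 * (γ • τ : ℍ) + 2 * x * (z / denom γ τ) + x * y)) *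
      𝐞(m * γ 1 0 * w ^ 2 / denom γ τ) = 𝐞(m * γ 1 0 * z ^ 2 / denom γ τ) *
      𝐞(m * ((x * γ 0 0 + y * γ 1 0 : ℝ) ^ 2 * τ + 2 * (x * γ 0 0 + y * γ 1 0 : ℝ) * z +
        (x * γ 0 0 + y * γ 1 0 : ℝ) * (x * γ 0 1 + y * γ 1 1 : ℝ))) by
    linear_combination denom γ τ ^ k * φ τ w * h
  rw [← exp_add, ← exp_add, hτ, hw]
  congr 1
  field_simp
  rw [ModularGroup.denom_apply]
  push_cast
  linear_combination
    (-m * x * (2 * z + (x * γ 0 0 + y * γ 1 0) * τ + (x * γ 0 1 + y * γ 1 1))) * hdet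

theorem heisenbergTranslate_add_intCast (hφ : IsJacobiForm k m φ g) (x y : ℝ) (l u : ℤ) (τ : ℍ)
    (z : ℂ) : heisenbergTranslate m φ (x + l) (y + u) τ z =
      𝐞(m * (x * u - l * y)) * heisenbergTranslate m φ x y τ z := by
  have harg : z + (x + l : ℝ) * τ + (y + u : ℝ) = (z + x * τ + y) + l * τ + u := by
    push_cast
    ring
  have hint : 𝐞(((m * l * u : ℤ) : ℂ)) = 1 := by
    rw [mul_comm, exp_int_mul_two_pi_mul_I]
  have hexp : 𝐞(m * ((x + l : ℝ) ^ 2 * τ + 2 * (x + l : ℝ) * z + (x + l : ℝ) * (y + u : ℝ))) *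
      𝐞(-m * l ^ 2 * τ - 2 * m * l * (z + x * τ + y)) =
      𝐞(m * (x * u - l * y)) * 𝐞(m * (x ^ 2 * τ + 2 * x * z + x * y)) := by
    rw [← one_mul (_ * 𝐞(m * (x ^ 2 * τ + 2 * x * z + x * y))), ← hint, ← exp_add, ← exp_add,
      ← exp_add]
    congr 1
    push_cast
    ring
  rw [heisenbergTranslate, harg, hφ.add_eq, heisenbergTranslate, ← mul_assoc, hexp, mul_assoc]

theorem hasSum_heisenbergTranslate (hφ : IsJacobiForm k m φ g) (x y : ℝ) (τ : ℍ) (z : ℂ) :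
    HasSum (fun p : ℤ × ℤ ↦ (g p.1).coeff p.2 * 𝐞(y * (p.2 + m * x)) *
      𝐞((p.1 + p.2 * x + m * x ^ 2 : ℝ) * τ) * 𝐞((p.2 + 2 * m * x : ℝ) * z))
      (heisenbergTranslate m φ x y τ z) := by
  refine ((hφ.hasSum τ (z + x * τ + y)).mul_left
    𝐞(m * (x ^ 2 * τ + 2 * x * z + x * y))).congr_fun fun p ↦ ?_
  rw [mul_assoc, mul_assoc, mul_left_comm _ ((g p.1).coeff p.2), ← exp_add, ← exp_add, ← exp_add]
  push_cast
  ring_nf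

theorem differentiable_heisenbergTranslate (hφ : IsJacobiForm k m φ g) (x y : ℝ) (τ : ℍ) :
    Differentiable ℂ (heisenbergTranslate m φ x y τ) :=
  differentiable_of_hasSum_exp (hφ.hasSum_heisenbergTranslate x y τ)

theorem hasSum_iteratedDeriv_heisenbergTranslate (hφ : IsJacobiForm k m φ g) (x y : ℝ) (j : ℕ)
    (τ : ℍ) : HasSum (fun p : ℤ × ℤ ↦ (2 * Real.pi * Complex.I * (p.2 + 2 * m * x : ℝ)) ^ j *
      ((g p.1).coeff p.2 * 𝐞(y * (p.2 + m * x))) * 𝐞((p.1 + p.2 * x + m * x ^ 2 : ℝ) * τ))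
      (iteratedDeriv j (heisenbergTranslate m φ x y τ) 0) := by
  simpa [mul_assoc] using
    hasSum_iteratedDeriv_of_hasSum_exp (hφ.hasSum_heisenbergTranslate x y τ) j 0

lemma exponent_nonneg (hφ : IsJacobiForm k m φ g) (hm : 0 < m) (x : ℝ) {n ρ : ℤ}
    (h : (g n).coeff ρ ≠ 0) : 0 ≤ n + ρ * x + m * x ^ 2 := by
  have hm' : (0 : ℝ) < m := by exact_mod_cast hm
  have hdisc : (0 : ℝ) ≤ 4 * n * m - ρ ^ 2 := by
    exact_mod_cast not_lt.mp (mt (hφ.coeff_eq_zero n ρ) h)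
  refine nonneg_of_mul_nonneg_right (a := 4 * (m : ℝ)) ?_ (mul_pos four_pos hm')
  nlinarith [sq_nonneg ((ρ : ℝ) + 2 * m * x)]

theorem isBoundedAtImInfty_iteratedDeriv_heisenbergTranslate (hφ : IsJacobiForm k m φ g)
    (hm : 0 < m) (x y : ℝ) (j : ℕ) :
    IsBoundedAtImInfty fun τ ↦ iteratedDeriv j (heisenbergTranslate m φ x y τ) 0 :=
  isBoundedAtImInfty_of_hasSum_exp (hφ.hasSum_iteratedDeriv_heisenbergTranslate x y j)
    fun _ hp ↦ hφ.exponent_nonneg hm x (left_ne_zero_of_mul (right_ne_zero_of_mul hp))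

theorem iteratedDeriv_heisenbergTranslate_slash (hφ : IsJacobiForm k m φ g) {x y : ℝ} {j : ℕ}
    (h : ∀ i < j, ∀ τ, iteratedDeriv i (heisenbergTranslate m φ x y τ) 0 = 0) (γ : SL(2, ℤ)) :
    (fun τ ↦ iteratedDeriv j (heisenbergTranslate m φ x y τ) 0) ∣[k + j] γ = fun τ ↦
      iteratedDeriv j (heisenbergTranslate m φ
        (x * γ 0 0 + y * γ 1 0) (x * γ 0 1 + y * γ 1 1) τ) 0 := by
  ext τ
  have hJ : denom γ τ ≠ 0 := denom_ne_zero _ τ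
  let f (z : ℂ) := heisenbergTranslate m φ x y (γ • τ) ((denom γ τ)⁻¹ * z)
  have hf : Differentiable ℂ f :=
    (hφ.differentiable_heisenbergTranslate x y _).comp (differentiable_id.const_mul _)
  have hderiv (i : ℕ) : iteratedDeriv i f 0 = (denom γ τ)⁻¹ ^ i *
      iteratedDeriv i (heisenbergTranslate m φ x y (γ • τ)) 0 :=
    (congrFun (iteratedDeriv_comp_const_mul
      (hφ.differentiable_heisenbergTranslate x y (γ • τ)).contDiff (denom γ τ)⁻¹) 0).trans
      (by rw [mul_zero])
  let u (z : ℂ) := (denom γ τ ^ k)⁻¹ * 𝐞(-(m * γ 1 0 * z ^ 2 / denom γ τ))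
  have heq : heisenbergTranslate m φ (x * γ 0 0 + y * γ 1 0) (x * γ 0 1 + y * γ 1 1) τ =
      fun z ↦ u z * f z := by
    ext z
    simp only [u, f, inv_mul_eq_div, hφ.heisenbergTranslate_smul, mul_neg, exp_neg]
    field_simp
  have hu : Differentiable ℂ u := by fun_prop
  simp only [heq]
  rw [iteratedDeriv_mul_of_forall_lt_eq_zero hu.contDiff.contDiffAt hf.contDiff.contDiffAt
    fun i hi ↦ by rw [hderiv, h i hi, mul_zero], hderiv, ModularForm.SL_slash_apply]
  simp only [u, ModularGroup.sl_moeb, neg_add_rev, zpow_add₀ hJ, zpow_neg, zpow_natCast, ne_eq,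
    OfNat.ofNat_ne_zero, not_false_eq_true, zero_pow, mul_zero, zero_div, neg_zero, exp_zero,
    mul_one, inv_pow]
  ring

lemma fourierCoeff_eq_zero_of_neg (hφ : IsJacobiForm k m φ g) (hm : 0 < m) {n : ℤ} (hn : n < 0) :
    g n = 0 := by
  ext ρ
  exact hφ.coeff_eq_zero n ρ (by nlinarith [mul_neg_of_neg_of_pos hn hm, sq_nonneg ρ])

theorem hasSum_iteratedDeriv (hφ : IsJacobiForm k m φ g) (j : ℕ) (τ : ℍ) (z : ℂ) :
    HasSum (fun n : ℤ ↦ iteratedDeriv j (expEval (g n)) z * 𝐞(n * τ))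
      (iteratedDeriv j (φ τ) z) := by
  have hφτ (z : ℂ) :
      HasSum (fun p : ℤ × ℤ ↦ (g p.1).coeff p.2 * 𝐞(p.1 * τ) * 𝐞((p.2 : ℝ) * z)) (φ τ z) := by
    simpa [mul_add, exp_add, mul_assoc] using hφ.hasSum τ z
  refine (hasSum_iteratedDeriv_of_hasSum_exp hφτ j z).prod_fiberwise fun n ↦ ?_
  have hgn (z : ℂ) : HasSum (fun ρ : ℤ ↦ (g n).coeff ρ * 𝐞((ρ : ℝ) * z)) (expEval (g n) z) := by
    simpa using hasSum_expEval (g n) z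
  refine ((hasSum_iteratedDeriv_of_hasSum_exp hgn j z).mul_right 𝐞(n * τ)).congr_fun fun ρ ↦ ?_
  ring

theorem hasSum_natCast_iteratedDeriv (hφ : IsJacobiForm k m φ g) (hm : 0 < m) (j : ℕ) (τ : ℍ)
    (z : ℂ) : HasSum (fun n : ℕ ↦ iteratedDeriv j (expEval (g n)) z * 𝐞(n * τ))
      (iteratedDeriv j (φ τ) z) := by
  have hneg (n : ℤ) (hn : n ∉ Set.range ((↑) : ℕ → ℤ)) :
      iteratedDeriv j (expEval (g n)) z * 𝐞(n * τ) = 0 := by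
    have : n < 0 := not_le.mp fun h ↦ hn ⟨n.toNat, Int.toNat_of_nonneg h⟩
    simp [hφ.fourierCoeff_eq_zero_of_neg hm this]
  simpa only [Function.comp_def, Int.cast_natCast] using
    (Nat.cast_injective.hasSum_iff hneg).mpr (hφ.hasSum_iteratedDeriv j τ z)

theorem exists_heisenbergTranslate_eq_of_mem_Gamma1 (hφ : IsJacobiForm k m φ g) {r : ℕ}
    (hr : r ≠ 0) (b : ℤ) {γ : SL(2, ℤ)} (hγ : γ ∈ CongruenceSubgroup.Gamma1 r) :
    ∃ ξ : ℂ, ξ ^ r = 1 ∧ ∀ τ z, heisenbergTranslate m φ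
      (0 * γ 0 0 + b / r * γ 1 0) (0 * γ 0 1 + b / r * γ 1 1) τ z =
        ξ * heisenbergTranslate m φ 0 (b / r) τ z := by
  have hr' : (r : ℂ) ≠ 0 := Nat.cast_ne_zero.mpr hr
  obtain ⟨-, hd, hc⟩ := CongruenceSubgroup.Gamma1_mem r γ |>.mp hγ
  obtain ⟨c, hc⟩ := (ZMod.intCast_zmod_eq_zero_iff_dvd _ r).mp hc
  obtain ⟨d, hd⟩ := (ZMod.intCast_eq_intCast_iff_dvd_sub 1 (γ 1 1) r).mp (by simpa using hd.symm)
  rw [sub_eq_iff_eq_add'] at hd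
  refine ⟨𝐞(m * ((0 : ℝ) * (b * d : ℤ) - (b * c : ℤ) * (b / r : ℝ))), ?_, fun τ z ↦ ?_⟩
  · rw [← exp_nat_mul, ← exp_int_mul_two_pi_mul_I (-(m * b * c * b))]
    congr 1
    push_cast
    field_simp
    ring
  · rw [← hφ.heisenbergTranslate_add_intCast, hc, hd]
    congr 1 <;> (push_cast; field_simp; ring)

theorem iteratedDeriv_expEval_eq_zero_of_forall_lt (hφ : IsJacobiForm k m φ g) (hm : 0 < m)
    {r : ℕ} [NeZero r] (b : ℤ) {j : ℕ}
    (hlt : ∀ i < j, ∀ n, iteratedDeriv i (expEval (g n)) (b / r) = 0)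
    (h : ∀ n : ℤ, 0 ≤ n → 12 * n ≤ (k + j) * (CongruenceSubgroup.Gamma1 r).index →
      iteratedDeriv j (expEval (g n)) (b / r) = 0) (n : ℤ) :
    iteratedDeriv j (expEval (g n)) (b / r) = 0 := by
  rcases lt_or_ge n 0 with hn | hn
  · simp [hφ.fourierCoeff_eq_zero_of_neg hm hn]
  lift n to ℕ using hn
  let F (i : ℕ) (τ : ℍ) : ℂ := iteratedDeriv i (heisenbergTranslate m φ 0 (b / r : ℝ) τ) 0
  have hF (i : ℕ) (τ : ℍ) : F i τ = iteratedDeriv i (φ τ) (b / r) := by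
    simp [F, heisenbergTranslate_zero_left, iteratedDeriv_comp_add_const]
  have hF_zero (i : ℕ) (hi : i < j) (τ : ℍ) : F i τ = 0 := by
    rw [hF]
    exact (hφ.hasSum_iteratedDeriv i τ (b / r)).unique (by simp [hlt i hi])
  have hF_slash := hφ.iteratedDeriv_heisenbergTranslate_slash hF_zero
  have hpow_slash : ∀ γ ∈ CongruenceSubgroup.Gamma1 r, (F j ∣[k + j] γ) ^ r = F j ^ r := by
    intro γ hγ
    obtain ⟨ξ, hξ, heq⟩ := hφ.exists_heisenbergTranslate_eq_of_mem_Gamma1 (NeZero.ne r) b hγ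
    ext τ
    simp only [F, hF_slash, Pi.pow_apply, funext (heq τ), iteratedDeriv_const_mul_field, mul_pow,
      hξ, one_mul]
  have hbdd (γ : SL(2, ℤ)) : IsBoundedAtImInfty (F j ∣[k + j] γ) := by
    rw [hF_slash]
    exact hφ.isBoundedAtImInfty_iteratedDeriv_heisenbergTranslate hm _ _ j
  have hsum (τ : ℍ) :
      HasSum (fun n : ℕ ↦ iteratedDeriv j (expEval (g n)) (b / r) * 𝐞(n * τ)) (F j τ) :=
    hF j τ ▸ hφ.hasSum_natCast_iteratedDeriv hm j τ (b / r)
  exact congrFun (sturm_bound_of_pow_slash_eq (NeZero.ne r) hpow_slash hbdd hsum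
    fun n hn ↦ h n (Int.natCast_nonneg n) hn) n

theorem cyclotomic_pow_dvd (hφ : IsJacobiForm k m φ g) (hm : 0 < m) {r : ℕ} [NeZero r] {V : ℕ}
    (h : ∀ n : ℤ, 0 ≤ n → 0 < V → n ≤ (k + V - 1 : ℝ) / 12 * (CongruenceSubgroup.Gamma1 r).index →
      (Polynomial.cyclotomic r ℂ).toLaurent ^ V ∣ g n) (n : ℤ) :
    (Polynomial.cyclotomic r ℂ).toLaurent ^ V ∣ g n := by
  simp only [cyclotomic_pow_dvd_iff (NeZero.ne r)] at h ⊢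
  intro b hb j hj
  induction j using Nat.strong_induction_on generalizing n with | h j ih
  refine hφ.iteratedDeriv_expEval_eq_zero_of_forall_lt hm b (fun i hi n ↦ ih i hi n (hi.trans hj))
    (fun n hn hle ↦ h n hn (by omega) ?_ b hb j hj) n
  have hjV : (j : ℝ) + 1 ≤ V := by exact_mod_cast hj
  have hle' : 12 * (n : ℝ) ≤ (k + j) * (CongruenceSubgroup.Gamma1 r).index := by exact_mod_cast hle
  nlinarith [Nat.cast_nonneg (α := ℝ) (CongruenceSubgroup.Gamma1 r).index]

end IsJacobiForm

end JacobiForm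

section Gamma1

open CongruenceSubgroup
open scoped MatrixGroups

theorem index_Gamma1_le (r : ℕ) [NeZero r] : (Gamma1 r).index ≤ r ^ 2 := by
  let firstColumn (γ : SL(2, ℤ)) : ZMod r × ZMod r := (γ 0 0, γ 1 0)
  have hmem {γ δ : SL(2, ℤ)} (h : firstColumn γ = firstColumn δ) : γ⁻¹ * δ ∈ Gamma1 r := by
    obtain ⟨h00, h10⟩ : (γ 0 0 : ZMod r) = δ 0 0 ∧ (γ 1 0 : ZMod r) = δ 1 0 := Prod.ext_iff.mp h
    have hdet (γ : SL(2, ℤ)) : (γ 0 0 * γ 1 1 - γ 0 1 * γ 1 0 : ZMod r) = 1 := by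
      exact_mod_cast congrArg (Int.cast : ℤ → ZMod r)
        ((Matrix.det_fin_two _).symm.trans γ.det_coe)
    simp only [Gamma1_mem, Matrix.SpecialLinearGroup.coe_mul, Matrix.SpecialLinearGroup.coe_inv,
      Matrix.adjugate_fin_two, Matrix.mul_apply, Fin.sum_univ_two]
    simp only [Matrix.cons_val', Matrix.of_apply, Matrix.cons_val_zero, Matrix.cons_val_one,
      Matrix.cons_val_fin_one, Int.cast_add, Int.cast_mul, Int.cast_neg, h00, h10]
    refine ⟨?_, ?_, ?_⟩
    · linear_combination hdet γ - γ 1 1 * h00 + γ 0 1 * h10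
    · linear_combination hdet δ
    · ring
  refine (Nat.card_le_card_of_injective (fun q : SL(2, ℤ) ⧸ Gamma1 r ↦ firstColumn q.out)
    fun q q' h ↦ ?_).trans_eq (by simp [sq])
  rw [← q.out_eq, ← q'.out_eq]
  exact QuotientGroup.eq.mpr (hmem h)

theorem one_le_mul_prod_primeFactors {r : ℕ} (hr : r ≠ 0) :
    1 ≤ (r : ℝ) * ∏ p ∈ r.primeFactors, (1 - 1 / (p : ℝ) ^ 2) := by
  have hprime (p : ℕ) (hp : p ∈ r.primeFactors) : (2 : ℝ) ≤ p := by
    exact_mod_cast (Nat.prime_of_mem_primeFactors hp).two_le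
  have hfactor (p : ℕ) (hp : p ∈ r.primeFactors) : 0 ≤ 1 - 1 / (p : ℝ) ^ 2 := by
    have := hprime p hp
    rw [sub_nonneg, div_le_one (by positivity)]
    nlinarith
  calc (1 : ℝ) ≤ ∏ p ∈ r.primeFactors, (p * (1 - 1 / (p : ℝ) ^ 2)) := by
        refine Finset.one_le_prod fun p hp ↦ ?_
        have := hprime p hp
        have hp' : p * (1 - 1 / (p : ℝ) ^ 2) = p - 1 / p := by field_simp
        have : 1 / (p : ℝ) ≤ 1 / 2 := one_div_le_one_div_of_le two_pos this
        linarith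
    _ = (∏ p ∈ r.primeFactors, (p : ℝ)) * ∏ p ∈ r.primeFactors, (1 - 1 / (p : ℝ) ^ 2) :=
        Finset.prod_mul_distrib
    _ ≤ r * ∏ p ∈ r.primeFactors, (1 - 1 / (p : ℝ) ^ 2) := by
        refine mul_le_mul_of_nonneg_right ?_ (Finset.prod_nonneg hfactor)
        rw [← Nat.cast_prod]
        exact_mod_cast Nat.le_of_dvd hr.bot_lt r.prod_primeFactors_dvd

theorem index_Gamma1_le_pow_three_mul_prod {r : ℕ} (hr : r ≠ 0) :
    ((Gamma1 r).index : ℝ) ≤ r ^ 3 * ∏ p ∈ r.primeFactors, (1 - 1 / (p : ℝ) ^ 2) := by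
  have : NeZero r := ⟨hr⟩
  calc ((Gamma1 r).index : ℝ) ≤ r ^ 2 := by exact_mod_cast index_Gamma1_le r
    _ ≤ r ^ 2 * (r * ∏ p ∈ r.primeFactors, (1 - 1 / (p : ℝ) ^ 2)) :=
        le_mul_of_one_le_right (by positivity) (one_le_mul_prod_primeFactors hr)
    _ = r ^ 3 * ∏ p ∈ r.primeFactors, (1 - 1 / (p : ℝ) ^ 2) := by ring

theorem le_mul_pow_three_mul_prod_of_le_mul_index_Gamma1 {r : ℕ} (hr : r ≠ 0) {x w : ℝ}
    (hx : 0 ≤ x) (h : x ≤ w * (Gamma1 r).index) :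
    x ≤ w * r ^ 3 * ∏ p ∈ r.primeFactors, (1 - 1 / (p : ℝ) ^ 2) := by
  have : NeZero r := ⟨hr⟩
  have hindex : (0 : ℝ) < (Gamma1 r).index := by
    exact_mod_cast Nat.pos_of_ne_zero Subgroup.FiniteIndex.index_ne_zero
  have hw : 0 ≤ w := nonneg_of_mul_nonneg_left (hx.trans h) hindex
  rw [mul_assoc]
  exact h.trans (mul_le_mul_of_nonneg_left (index_Gamma1_le_pow_three_mul_prod hr) hw)

end Gamma1

theorem stmt_5_general {k m : ℤ} (hm : 0 < m) {φ : UpperHalfPlane → ℂ → ℂ} {g : ℤ → ℂ[T;T⁻¹]}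
    (hφ : IsJacobiForm k m φ g) {ν : ℕ → ℕ} {s : Finset ℕ} (hs : 0 ∉ s)
    (hdvd : ∀ n : ℤ, 0 ≤ n →
      (∃ r ∈ s, 0 < ν r ∧ n ≤ (k + ν r - 1 : ℝ) / 12 * (CongruenceSubgroup.Gamma1 r).index) →
      ∏ r ∈ s, (Polynomial.cyclotomic r ℂ).toLaurent ^ ν r ∣ g n) (n : ℤ) :
    ∏ r ∈ s, (Polynomial.cyclotomic r ℂ).toLaurent ^ ν r ∣ g n := by
  simp only [prod_cyclotomic_pow_dvd_iff] at hdvd ⊢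
  intro r hr
  have : NeZero r := ⟨ne_of_mem_of_not_mem hr hs⟩
  exact hφ.cyclotomic_pow_dvd hm (fun n hn hν hle ↦ hdvd n hn ⟨r, hr, hν, hle⟩ r hr) n

/-- Theorem 5.3, m-independent bound: let `g` be a Jacobi cusp form of
weight `k` and positive index `m` with `qⁿ`-coefficients the Laurent polynomials
`g_n(ζ)`, let `ν : ℤ_{>0} → ℤ_{≥0}` be finitely supported (encoded by a bound `Nb`),
and let `b(ζ) = Π_{r≥1} Φ_r(ζ)^{ν(r)}`.  If `b(ζ)` divides `g_n(ζ)` in `ℂ[ζ,ζ⁻¹]` for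
every `n` with `0 ≤ n ≤ max_{r≥1, ν(r)>0} ((k+ν(r)−1)/12)·r³·Π_{p∣r}(1−1/p²)`, then
`b(ζ)` divides `g_n(ζ)` for every `n`. -/
theorem stmt_5 (k : ℤ) (m : ℤ) (hm : 0 < m)
    (g : ℂ → ℂ → ℂ)
    (hol : DifferentiableOn ℂ (fun p : ℂ × ℂ => g p.1 p.2) {p : ℂ × ℂ | 0 < p.1.im})
    (transf₁ : ∀ γ : Matrix.SpecialLinearGroup (Fin 2) ℤ, ∀ τ z : ℂ, 0 < τ.im →
      g ((((γ : Matrix (Fin 2) (Fin 2) ℤ) 0 0 : ℂ) * τ + ((γ : Matrix (Fin 2) (Fin 2) ℤ) 0 1 : ℂ)) /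
           (((γ : Matrix (Fin 2) (Fin 2) ℤ) 1 0 : ℂ) * τ + ((γ : Matrix (Fin 2) (Fin 2) ℤ) 1 1 : ℂ)))
        (z / (((γ : Matrix (Fin 2) (Fin 2) ℤ) 1 0 : ℂ) * τ + ((γ : Matrix (Fin 2) (Fin 2) ℤ) 1 1 : ℂ))) =
      (((γ : Matrix (Fin 2) (Fin 2) ℤ) 1 0 : ℂ) * τ + ((γ : Matrix (Fin 2) (Fin 2) ℤ) 1 1 : ℂ)) ^ k *
        Complex.exp (2 * Real.pi * Complex.I * (m : ℂ) * ((γ : Matrix (Fin 2) (Fin 2) ℤ) 1 0 : ℂ) * z ^ 2 /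
          (((γ : Matrix (Fin 2) (Fin 2) ℤ) 1 0 : ℂ) * τ + ((γ : Matrix (Fin 2) (Fin 2) ℤ) 1 1 : ℂ))) *
        g τ z)
    (transf₂ : ∀ lam mu : ℤ, ∀ τ z : ℂ, 0 < τ.im →
      g τ (z + (lam : ℂ) * τ + (mu : ℂ)) =
        Complex.exp (2 * Real.pi * Complex.I *
            (-(m : ℂ) * (lam : ℂ) ^ 2 * τ - 2 * (m : ℂ) * (lam : ℂ) * z)) * g τ z)
    (c : ℤ × ℤ → ℂ)
    (habs : ∀ τ z : ℂ, 0 < τ.im → Summable (fun p : ℤ × ℤ =>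
      ‖c p * Complex.exp (2 * Real.pi * Complex.I * ((p.1 : ℂ) * τ + (p.2 : ℂ) * z))‖))
    (hsum : ∀ τ z : ℂ, 0 < τ.im →
      HasSum (fun p : ℤ × ℤ =>
        c p * Complex.exp (2 * Real.pi * Complex.I * ((p.1 : ℂ) * τ + (p.2 : ℂ) * z)))
        (g τ z))
    (hcusp : ∀ n ρ : ℤ, 4 * n * m - ρ ^ 2 ≤ 0 → c (n, ρ) = 0)
    (gLP : ℤ → LaurentPolynomial ℂ)
    (hgLP : ∀ n ρ : ℤ, (gLP n).coeff ρ = c (n, ρ))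
    (ν : ℕ → ℕ) (Nb : ℕ) (hNb : ∀ r : ℕ, Nb < r → ν r = 0)
    (bL : LaurentPolynomial ℂ)
    (hbL : bL = ∏ r ∈ Finset.Icc 1 Nb, ((Polynomial.cyclotomic r ℂ).toLaurent) ^ ν r)
    (hdvd : ∀ n : ℤ, 0 ≤ n →
      (∃ rr : ℕ, 1 ≤ rr ∧ 0 < ν rr ∧
        (n : ℝ) ≤ ((k : ℝ) + (ν rr : ℝ) - 1) / 12 * (rr : ℝ) ^ 3 *
          ∏ p ∈ rr.primeFactors, (1 - 1 / (p : ℝ) ^ 2)) →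
      bL ∣ gLP n) :
    ∀ n : ℤ, bL ∣ gLP n := by
  subst hbL
  have hφ : IsJacobiForm k m (fun τ : UpperHalfPlane ↦ g τ) gLP :=
    { smul_eq := fun γ τ z ↦ by
        rw [UpperHalfPlane.coe_specialLinearGroup_apply, ModularGroup.denom_apply]
        simpa [mul_assoc, mul_div_assoc] using transf₁ γ τ z τ.im_pos
      add_eq := fun l u τ z ↦ transf₂ l u τ z τ.im_pos
      hasSum := fun τ z ↦ by simpa only [hgLP] using hsum τ z τ.im_pos
      coeff_eq_zero := fun n ρ h ↦ (hgLP n ρ).trans (hcusp n ρ h.le) }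
  refine stmt_5_general hm hφ (by simp) fun n hn ⟨r, hr, hν, hle⟩ ↦ hdvd n hn ?_
  have hr1 : 1 ≤ r := (Finset.mem_Icc.mp hr).1
  exact ⟨r, hr1, hν, le_mul_pow_three_mul_prod_of_le_mul_index_Gamma1 (by omega)
    (Int.cast_nonneg hn) hle⟩
end

section
/- Let k be an integer and n a positive integer. Let Γ be a subgroup of SL₂(ℤ) of finite index I containing the principal congruence subgroup Γ(n). Let f : ℍ → ℂ be a modular form of weight k for Γ: f is holomorphic, f((aτ+b)/(cτ+d)) = (cτ+d)^k f(τ) for all [[a,b],[c,d]] ∈ Γ, and for every g ∈ SL₂(ℤ) the function f|_k g is bounded on {τ : Im τ ≥ 1}. Then f(τ+n) = f(τ), so f has a Fourier expansion f(τ) = Σ_{j≥0} a_j e(jτ/n); and if a_j = 0 for every integer j with 0 ≤ j ≤ nkI/12, then f is identically zero. -/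
open Complex

/-!
Multiply the translates of `f` over the cosets of `Γ` in `SL₂(ℤ)`. The product is a form of level
one and weight `kI`, and since every translate is bounded at `∞`, it decays there at least as fast
as `f` itself. If the coefficients `a j` with `j ≤ hkI/12` vanish, where the expansion of `f` is in
powers of `e(τ/h)`, this decay forces the product to vanish at `∞` to order more than `kI/12` in
`e(τ)`. By the Sturm bound of level one the product is zero, hence so is `f`.
-/

section SturmBound

open UpperHalfPlane Filter Function ModularForm MatrixGroups Matrix.SpecialLinearGroup Asymptotics
open scoped Manifold

local notation "𝕢" => Periodic.qParam

section QExpansion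

variable {h h' : ℝ} {f : ℍ → ℂ} {a : ℕ → ℂ} {m d : ℕ}

lemma qParam_pow_isLittleO (hh : 0 < h) (hh' : 0 < h') (hlt : d * h < m * h') :
    (fun τ : ℍ ↦ 𝕢 h τ ^ m) =o[atImInfty] fun τ : ℍ ↦ 𝕢 h' τ ^ d := by
  have norm_pow (w : ℝ) (r : ℕ) (τ : ℍ) :
      ‖𝕢 w τ ^ r‖ = Real.exp (-(2 * Real.pi * (r / w)) * τ.im) := by
    rw [norm_pow, Periodic.norm_qParam, ← Real.exp_nat_mul, coe_im]
    ring_nf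
  have exponent_lt : 0 < 2 * Real.pi * (m / h - d / h') :=
    mul_pos Real.two_pi_pos (sub_pos.mpr ((div_lt_div_iff₀ hh' hh).mpr hlt))
  rw [← isLittleO_norm_norm]
  simp only [norm_pow, Real.isLittleO_exp_comp_exp_comp]
  refine (tendsto_comap.const_mul_atTop exponent_lt).congr fun τ ↦ ?_
  ring

lemma sub_sum_range_isBigO_qParam_pow (hh : 0 < h)
    (hf : ∀ τ : ℍ, HasSum (fun j ↦ a j • 𝕢 h τ ^ j) (f τ)) (m : ℕ) :
    (fun τ : ℍ ↦ f τ - ∑ j ∈ Finset.range m, a j • 𝕢 h τ ^ j) =O[atImInfty]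
      fun τ : ℍ ↦ 𝕢 h τ ^ m := by
  have quotient_bounded : IsBoundedAtImInfty fun τ : ℍ ↦
      (f τ - ∑ j ∈ Finset.range m, a j • 𝕢 h τ ^ j) / 𝕢 h τ ^ m := by
    refine isBoundedAtImInfty_of_hasSum_qExpansion (c := fun j ↦ a (j + m)) hh fun τ ↦ ?_
    refine (((hasSum_nat_add_iff' m).mpr (hf τ)).div_const (𝕢 h τ ^ m)).congr_fun fun j ↦ ?_
    rw [smul_eq_mul, smul_eq_mul, pow_add, ← mul_assoc,
      mul_div_cancel_right₀ _ (pow_ne_zero m (Periodic.qParam_ne_zero _))]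
  refine (IsBigO.smul quotient_bounded (isBigO_refl (fun τ : ℍ ↦ 𝕢 h τ ^ m) atImInfty)).congr
    (fun τ ↦ ?_) fun τ ↦ one_smul ℝ _
  exact div_mul_cancel₀ _ (pow_ne_zero m (Periodic.qParam_ne_zero _))

lemma isBigO_qParam_pow_of_coeff_eq_zero (hh : 0 < h)
    (hf : ∀ τ : ℍ, HasSum (fun j ↦ a j • 𝕢 h τ ^ j) (f τ)) (ha : ∀ j < m, a j = 0) :
    f =O[atImInfty] fun τ : ℍ ↦ 𝕢 h τ ^ m := by
  refine (sub_sum_range_isBigO_qParam_pow hh hf m).congr_left fun τ ↦ ?_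
  rw [Finset.sum_eq_zero fun j hj ↦ by rw [ha j (Finset.mem_range.mp hj), zero_smul], sub_zero]

lemma coeff_eq_zero_of_isLittleO_qParam_pow (hh : 0 < h)
    (hf : ∀ τ : ℍ, HasSum (fun j ↦ a j • 𝕢 h τ ^ j) (f τ))
    (hfd : f =o[atImInfty] fun τ : ℍ ↦ 𝕢 h τ ^ d) : ∀ i ≤ d, a i = 0 := by
  intro i
  induction i using Nat.strong_induction_on with | _ i ih =>
  intro hid
  have remainder : (fun τ : ℍ ↦ f τ - a i * 𝕢 h τ ^ i) =o[atImInfty] fun τ : ℍ ↦ 𝕢 h τ ^ i := by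
    refine ((sub_sum_range_isBigO_qParam_pow hh hf (i + 1)).congr_left fun τ ↦ ?_).trans_isLittleO
      (qParam_pow_isLittleO hh hh (by gcongr; exact i.lt_succ_self))
    rw [Finset.sum_range_succ, Finset.sum_eq_zero fun j hj ↦ ?_, zero_add, smul_eq_mul]
    have hji := Finset.mem_range.mp hj
    rw [ih j hji (hji.le.trans hid), zero_smul]
  have f_isLittleO : f =o[atImInfty] fun τ : ℍ ↦ 𝕢 h τ ^ i := by
    rcases hid.eq_or_lt with rfl | hlt
    · exact hfd
    · exact hfd.trans (qParam_pow_isLittleO hh hh (by gcongr))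
  have leading_term : (fun τ : ℍ ↦ a i * 𝕢 h τ ^ i) =o[atImInfty] fun τ : ℍ ↦ 𝕢 h τ ^ i :=
    (f_isLittleO.sub remainder).congr_left fun τ ↦ sub_sub_cancel _ _
  by_contra hai
  exact isLittleO_irrefl
    (Frequently.of_forall fun τ : ℍ ↦ pow_ne_zero i (Periodic.qParam_ne_zero (τ : ℂ)))
    ((isLittleO_const_mul_left_iff hai).mp leading_term)

end QExpansion

section Norm

variable {𝒢 ℋ : Subgroup (GL (Fin 2) ℝ)} [𝒢.IsFiniteRelIndex ℋ] {k : ℤ}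
  {F : Type*} [FunLike F ℍ ℂ] [ModularFormClass F 𝒢 k]

lemma isBoundedAtImInfty_quotientFunc_s8 (hℋ : IsCusp OnePoint.infty ℋ) (f : F)
    (q : ℋ ⧸ 𝒢.subgroupOf ℋ) : IsBoundedAtImInfty (SlashInvariantForm.quotientFunc f q) := by
  induction q using Quotient.inductionOn with | h r =>
  exact ModularFormClass.bdd_at_cusps f
    (hℋ.smul_of_mem (inv_mem r.2)).of_isFiniteRelIndex _ rfl

lemma norm_isBigO_self [ℋ.HasDetPlusMinusOne] (hℋ : IsCusp OnePoint.infty ℋ) (f : F) :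
    ModularForm.norm ℋ f =O[atImInfty] f := by
  classical
  let := Fintype.ofFinite (ℋ ⧸ 𝒢.subgroupOf ℋ)
  have other_factors : (∏ q ∈ Finset.univ.erase (⟦1⟧ : ℋ ⧸ 𝒢.subgroupOf ℋ),
      SlashInvariantForm.quotientFunc f q) =O[atImInfty] (1 : ℍ → ℝ) :=
    BoundedAtFilter.prod _ fun q _ ↦ isBoundedAtImInfty_quotientFunc_s8 hℋ f q
  have factor_one : SlashInvariantForm.quotientFunc f (⟦1⟧ : ℋ ⧸ 𝒢.subgroupOf ℋ) = f := by
    simp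
  rw [ModularForm.coe_norm, ← Finset.mul_prod_erase Finset.univ
    (fun q ↦ SlashInvariantForm.quotientFunc f q) (Finset.mem_univ ⟦1⟧), factor_one, mul_comm]
  exact (IsBigO.smul other_factors (isBigO_refl f atImInfty)).congr_right fun τ ↦ one_smul ℝ _

end Norm

lemma levelOne_eq_zero_of_isLittleO_qParam_pow {k : ℤ} {f : ModularForm 𝒮ℒ k}
    (hf : f =o[atImInfty] fun τ : ℍ ↦ 𝕢 1 τ ^ (k.toNat / 12)) : f = 0 := by
  have coeff_eq_zero := coeff_eq_zero_of_isLittleO_qParam_pow one_pos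
    (ModularForm.hasSum_qExpansion f one_pos one_mem_strictPeriods_SL) hf
  refine ModularForm.sturm_bound_levelOne ((Nat.cast_lt.mpr (Nat.lt_succ_self _)).trans_le ?_)
  exact PowerSeries.nat_le_order _ _ fun i hi ↦ coeff_eq_zero i (Nat.lt_succ_iff.mp hi)

theorem eq_zero_of_coeff_eq_zero_of_le_sturm_bound {𝒢 : Subgroup (GL (Fin 2) ℝ)}
    [𝒢.IsArithmetic] {k : ℤ} {h : ℝ} (hh : 0 < h) (f : ModularForm 𝒢 k) {a : ℕ → ℂ}
    (hf : ∀ τ : ℍ, HasSum (fun j ↦ a j • 𝕢 h τ ^ j) (f τ))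
    (ha : ∀ j : ℕ, (j : ℝ) ≤ h * k * 𝒢.relIndex 𝒮ℒ / 12 → a j = 0) : f = 0 := by
  rcases lt_or_ge k 0 with hk | hk
  · exact ModularForm.isZero_of_neg_weight hk f
  lift k to ℕ using hk
  have isCusp_infty : IsCusp OnePoint.infty 𝒮ℒ := isCusp_SL2Z_iff'.mpr ⟨1, by simp⟩
  set N := ModularForm.norm 𝒮ℒ f
  set w := k * 𝒢.relIndex 𝒮ℒ
  have f_isBigO : f =O[atImInfty] fun τ : ℍ ↦ 𝕢 h τ ^ (⌊h * w / 12⌋₊ + 1) := by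
    refine isBigO_qParam_pow_of_coeff_eq_zero hh hf fun j hj ↦ ha j ?_
    have := (Nat.le_floor_iff (by positivity)).mp (Nat.lt_succ_iff.mp hj)
    simpa [w, mul_assoc] using this
  have order_lt : ((w / 12 : ℕ) : ℝ) * h < (⌊h * w / 12⌋₊ + 1 : ℕ) * 1 := by
    have : ((w / 12 : ℕ) : ℝ) ≤ w / 12 := Nat.cast_div_le
    push_cast
    nlinarith [Nat.lt_floor_add_one (h * w / 12)]
  have N_isLittleO : N =o[atImInfty] fun τ : ℍ ↦ 𝕢 1 τ ^ (w / 12) :=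
    ((norm_isBigO_self isCusp_infty f).trans f_isBigO).trans_isLittleO
      (qParam_pow_isLittleO hh one_pos order_lt)
  have weight_toNat : ((k : ℤ) * (𝒢.relIndex 𝒮ℒ : ℤ)).toNat = w := by
    rw [← Nat.cast_mul, Int.toNat_natCast]
  have N_eq_zero : N = 0 := levelOne_eq_zero_of_isLittleO_qParam_pow (weight_toNat ▸ N_isLittleO)
  exact DFunLike.coe_injective ((ModularForm.norm_eq_zero_iff 𝒮ℒ f).mp N_eq_zero)

lemma relIndex_map_mapGL (Γ : Subgroup SL(2, ℤ)) : (Γ.map (mapGL ℝ)).relIndex 𝒮ℒ = Γ.index := by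
  rw [MonoidHom.range_eq_map, Subgroup.relIndex_map_map_of_injective _ _ mapGL_injective,
    Subgroup.relIndex_top_right]

lemma slash_SL2Z_apply {k : ℤ} (f : ℂ → ℂ) (g : SL(2, ℤ)) (τ : ℍ) :
    ((fun z : ℍ ↦ f z) ∣[k] g) τ = ((g 1 0 : ℂ) * τ + g 1 1) ^ (-k) *
      f (((g 0 0 : ℂ) * τ + g 0 1) / ((g 1 0 : ℂ) * τ + g 1 1)) := by
  rw [ModularForm.SL_slash_apply, ModularGroup.denom_apply, coe_specialLinearGroup_apply, mul_comm]
  simp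

/-- The modular form for the image in `GL₂(ℝ)` of a subgroup `Γ` of `SL₂(ℤ)`, built from a
holomorphic function that is weight-`k` invariant under `Γ`. Boundedness at the cusps is expressed
by the translates under all of `SL₂(ℤ)`. -/
def modularFormOfSL2Z {Γ : Subgroup SL(2, ℤ)} {k : ℤ} (f : ℍ → ℂ) (hol : MDiff f)
    (invariant : ∀ γ ∈ Γ, f ∣[k] γ = f) (bounded : ∀ g : SL(2, ℤ), IsBoundedAtImInfty (f ∣[k] g)) :
    ModularForm (Γ.map (mapGL ℝ)) k where
  toFun := f
  slash_action_eq' := by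
    rintro _ ⟨γ, hγ, rfl⟩
    exact invariant γ hγ
  holo' := hol
  bdd_at_cusps' {c} hc := by
    have hc_SL2Z : IsCusp c 𝒮ℒ := hc.mono (Subgroup.map_le_range _ _)
    exact (OnePoint.isBoundedAt_iff_forall_SL2Z hc_SL2Z).mpr fun g _ ↦ bounded g

theorem stmt_8_general (k : ℤ) (Γ : Subgroup SL(2, ℤ)) [Γ.FiniteIndex] (f : ℂ → ℂ)
    (hol : DifferentiableOn ℂ f {τ : ℂ | 0 < τ.im})
    (transf : ∀ γ ∈ Γ, ∀ τ : ℂ, 0 < τ.im →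
      f (((γ 0 0 : ℂ) * τ + γ 0 1) / ((γ 1 0 : ℂ) * τ + γ 1 1)) =
        ((γ 1 0 : ℂ) * τ + γ 1 1) ^ k * f τ)
    (bdd : ∀ g : SL(2, ℤ), ∃ C : ℝ, ∀ τ : ℂ, 1 ≤ τ.im →
      ‖((g 1 0 : ℂ) * τ + g 1 1) ^ (-k) *
        f (((g 0 0 : ℂ) * τ + g 0 1) / ((g 1 0 : ℂ) * τ + g 1 1))‖ ≤ C) :
    (∀ n : ℤ, ModularGroup.T ^ n ∈ Γ → ∀ τ : ℂ, 0 < τ.im → f (τ + n) = f τ) ∧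
    (∀ h : ℝ, 0 < h → ∀ a : ℕ → ℂ,
      (∀ τ : ℂ, 0 < τ.im →
        HasSum (fun j : ℕ ↦ a j * exp (2 * Real.pi * Complex.I * j * τ / h)) (f τ)) →
      (∀ j : ℕ, (j : ℝ) ≤ h * k * Γ.index / 12 → a j = 0) →
      ∀ τ : ℂ, 0 < τ.im → f τ = 0) := by
  refine ⟨fun n hn τ hτ ↦ ?_, fun h hh a expansion ha τ hτ ↦ ?_⟩
  · simpa [ModularGroup.coe_T_zpow] using transf _ hn τ hτ
  have invariant (γ) (hγ : γ ∈ Γ) : (fun z : ℍ ↦ f z) ∣[k] γ = fun z : ℍ ↦ f z := by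
    ext τ
    have denom_ne_zero : (γ 1 0 : ℂ) * τ + γ 1 1 ≠ 0 :=
      ModularGroup.denom_apply γ τ ▸ UpperHalfPlane.denom_ne_zero γ τ
    rw [slash_SL2Z_apply, transf γ hγ τ τ.im_pos, ← mul_assoc, ← zpow_add₀ denom_ne_zero,
      neg_add_cancel, zpow_zero, one_mul]
  have bounded (g : SL(2, ℤ)) : IsBoundedAtImInfty ((fun z : ℍ ↦ f z) ∣[k] g) := by
    obtain ⟨C, hC⟩ := bdd g
    refine isBoundedAtImInfty_iff.mpr ⟨C, 1, fun z hz ↦ ?_⟩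
    exact slash_SL2Z_apply f g z ▸ hC z hz
  have mdifferentiable : MDiff fun z : ℍ ↦ f z := by
    refine mdifferentiable_iff.mpr (hol.congr fun z hz ↦ ?_)
    rw [comp_apply, ofComplex_apply_of_im_pos hz]
  have form_eq_zero :
      modularFormOfSL2Z (fun z : ℍ ↦ f z) mdifferentiable invariant bounded = 0 := by
    refine eq_zero_of_coeff_eq_zero_of_le_sturm_bound hh _ (a := a) (fun z ↦ ?_)
      (by rwa [relIndex_map_mapGL])
    refine (expansion z z.im_pos).congr_fun fun j ↦ ?_
    rw [smul_eq_mul, Periodic.qParam, ← exp_nat_mul]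
    ring_nf
  exact DFunLike.congr_fun form_eq_zero ⟨τ, hτ⟩

end SturmBound

/-- valence inequality for subgroups: let `Γ ≤ SL₂(ℤ)` have finite index
`I` and contain `Γ(n)`, and let `f` be a modular form of weight `k` for `Γ` (holomorphic
on `ℍ`, weight-`k` invariant under `Γ`, and with `f|_k g` bounded on `{Im τ ≥ 1}` for
every `g ∈ SL₂(ℤ)`).  Then `f(τ+n) = f(τ)`; and for any Fourier expansion
`f(τ) = Σ_{j≥0} a_j e(jτ/n)`, if `a_j = 0` for all `0 ≤ j ≤ nkI/12` then `f ≡ 0`. -/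
theorem stmt_8 (k : ℤ) (n : ℕ) (hn : 0 < n)
    (Γ : Subgroup (Matrix.SpecialLinearGroup (Fin 2) ℤ))
    (ind : ℕ) (hind : Γ.index = ind) (hindpos : 0 < ind)
    (hΓ : CongruenceSubgroup.Gamma n ≤ Γ)
    (f : ℂ → ℂ)
    (hol : DifferentiableOn ℂ f {τ : ℂ | 0 < τ.im})
    (transf : ∀ γ ∈ Γ, ∀ τ : ℂ, 0 < τ.im →
      f ((((γ : Matrix (Fin 2) (Fin 2) ℤ) 0 0 : ℂ) * τ + ((γ : Matrix (Fin 2) (Fin 2) ℤ) 0 1 : ℂ)) /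
          (((γ : Matrix (Fin 2) (Fin 2) ℤ) 1 0 : ℂ) * τ + ((γ : Matrix (Fin 2) (Fin 2) ℤ) 1 1 : ℂ))) =
        (((γ : Matrix (Fin 2) (Fin 2) ℤ) 1 0 : ℂ) * τ + ((γ : Matrix (Fin 2) (Fin 2) ℤ) 1 1 : ℂ)) ^ k * f τ)
    (bdd : ∀ g : Matrix.SpecialLinearGroup (Fin 2) ℤ, ∃ C : ℝ, ∀ τ : ℂ, 1 ≤ τ.im →
      ‖(((g : Matrix (Fin 2) (Fin 2) ℤ) 1 0 : ℂ) * τ + ((g : Matrix (Fin 2) (Fin 2) ℤ) 1 1 : ℂ)) ^ (-k) *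
        f ((((g : Matrix (Fin 2) (Fin 2) ℤ) 0 0 : ℂ) * τ + ((g : Matrix (Fin 2) (Fin 2) ℤ) 0 1 : ℂ)) /
           (((g : Matrix (Fin 2) (Fin 2) ℤ) 1 0 : ℂ) * τ + ((g : Matrix (Fin 2) (Fin 2) ℤ) 1 1 : ℂ)))‖ ≤ C) :
    (∀ τ : ℂ, 0 < τ.im → f (τ + n) = f τ) ∧
    (∀ a : ℕ → ℂ,
      (∀ τ : ℂ, 0 < τ.im →
        HasSum (fun j : ℕ => a j * Complex.exp (2 * Real.pi * Complex.I * j * τ / n)) (f τ)) →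
      (∀ j : ℕ, (j : ℝ) ≤ (n : ℝ) * (k : ℝ) * (ind : ℝ) / 12 → a j = 0) →
      ∀ τ : ℂ, 0 < τ.im → f τ = 0) := by
  subst hind
  have : Γ.FiniteIndex := ⟨hindpos.ne'⟩
  obtain ⟨periodic, vanishing⟩ := stmt_8_general k Γ f hol transf bdd
  have hT : ModularGroup.T ^ (n : ℤ) ∈ Γ :=
    hΓ (CongruenceSubgroup.ModularGroup_T_pow_mem_Gamma n n dvd_rfl)
  exact ⟨by simpa using periodic n hT, by simpa using vanishing n (by simpa using hn)⟩
end
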